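/- arXiv:1405.1938 — 2 statements merged into one kernel-verified Lean document; each statement's English description precedes it below -/
import Mathlib

section
/- Let n > 1 and let ρ ∈ ℂ be a primitive n-th root of unity, and let A = ℂ_ρ[x,y,z] be the quotient of the free ℂ-algebra on x, y, z by the two-sided ideal generated by xy − ρyx, yz − ρzy, zx − ρxz. Then the center Z(A) is isomorphic as a ℂ-algebra to ℂ[u,v,w,g]/(uvw − g^n). -/
/-- The generators of the free algebra on three variables. -/
noncomputable def freeGen (i : Fin 3) : FreeAlgebra ℂ (Fin 3) := FreeAlgebra.ι ℂ i

/-- The defining relations of the quantum affine 3-space `ℂ_ρ[x,y,z]`: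
`xy = ρ yx`, `yz = ρ zy`, `zx = ρ xz`. -/
inductive QuantumRel (ρ : ℂ) : FreeAlgebra ℂ (Fin 3) → FreeAlgebra ℂ (Fin 3) → Prop
  | xy : QuantumRel ρ (freeGen 0 * freeGen 1) (ρ • (freeGen 1 * freeGen 0))
  | yz : QuantumRel ρ (freeGen 1 * freeGen 2) (ρ • (freeGen 2 * freeGen 1))
  | zx : QuantumRel ρ (freeGen 2 * freeGen 0) (ρ • (freeGen 0 * freeGen 2))

/-- The quantum affine 3-space `ℂ_ρ[x,y,z]`. -/
noncomputable abbrev QuantumAlg (ρ : ℂ) := RingQuot (QuantumRel ρ)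

/-- The image of `x` in `ℂ_ρ[x,y,z]`. -/
noncomputable def qX (ρ : ℂ) : QuantumAlg ρ := RingQuot.mkAlgHom ℂ (QuantumRel ρ) (freeGen 0)

/-- The image of `y` in `ℂ_ρ[x,y,z]`. -/
noncomputable def qY (ρ : ℂ) : QuantumAlg ρ := RingQuot.mkAlgHom ℂ (QuantumRel ρ) (freeGen 1)

/-- The image of `z` in `ℂ_ρ[x,y,z]`. -/
noncomputable def qZ (ρ : ℂ) : QuantumAlg ρ := RingQuot.mkAlgHom ℂ (QuantumRel ρ) (freeGen 2)



namespace QProof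

open Finsupp

/-- The ordered monomial `x^a y^b z^c`. -/
noncomputable def mon (ρ : ℂ) (p : ℕ × ℕ × ℕ) : QuantumAlg ρ :=
  qX ρ ^ p.1 * qY ρ ^ p.2.1 * qZ ρ ^ p.2.2

lemma relXY (ρ : ℂ) : qX ρ * qY ρ = ρ • (qY ρ * qX ρ) := by
  have := RingQuot.mkAlgHom_rel ℂ (QuantumRel.xy (ρ := ρ))
  simp only [map_mul, map_smul] at this
  exact this

lemma relYZ (ρ : ℂ) : qY ρ * qZ ρ = ρ • (qZ ρ * qY ρ) := by
  have := RingQuot.mkAlgHom_rel ℂ (QuantumRel.yz (ρ := ρ))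
  simp only [map_mul, map_smul] at this
  exact this

lemma relZX (ρ : ℂ) : qZ ρ * qX ρ = ρ • (qX ρ * qZ ρ) := by
  have := RingQuot.mkAlgHom_rel ℂ (QuantumRel.zx (ρ := ρ))
  simp only [map_mul, map_smul] at this
  exact this

lemma qcomm_one {A : Type*} [Ring A] [Algebra ℂ A] (q : ℂ) (s t : A)
    (h : t * s = q • (s * t)) (a : ℕ) : t * s ^ a = q ^ a • (s ^ a * t) := by
  induction a with
  | zero => simp
  | succ a ih =>
    rw [pow_succ, ← mul_assoc, ih, smul_mul_assoc, mul_assoc, h, mul_smul_comm, smul_smul,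
      pow_succ, mul_assoc]

lemma qcomm {A : Type*} [Ring A] [Algebra ℂ A] (q : ℂ) (s t : A)
    (h : t * s = q • (s * t)) (a b : ℕ) : t ^ b * s ^ a = (q ^ b) ^ a • (s ^ a * t ^ b) := by
  induction b with
  | zero => simp
  | succ b ih =>
    rw [pow_succ, mul_assoc, qcomm_one q s t h, mul_smul_comm, ← mul_assoc, ih, smul_mul_assoc,
      smul_smul, mul_assoc]
    congr 1
    ring

lemma relYX' (ρ : ℂ) (h : ρ ≠ 0) : qY ρ * qX ρ = ρ⁻¹ • (qX ρ * qY ρ) := by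
  rw [relXY, smul_smul, inv_mul_cancel₀ h, one_smul]

lemma relZY' (ρ : ℂ) (h : ρ ≠ 0) : qZ ρ * qY ρ = ρ⁻¹ • (qY ρ * qZ ρ) := by
  rw [relYZ, smul_smul, inv_mul_cancel₀ h, one_smul]

/-- The structure constant. -/
noncomputable def kap (ρ : ℂ) (p r : ℕ × ℕ × ℕ) : ℂ :=
  (ρ ^ p.2.2) ^ r.1 * (ρ⁻¹ ^ p.2.1) ^ r.1 * (ρ⁻¹ ^ p.2.2) ^ r.2.1

lemma kap_ne (ρ : ℂ) (h : ρ ≠ 0) (p r : ℕ × ℕ × ℕ) : kap ρ p r ≠ 0 := by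
  unfold kap; positivity

lemma mon_mul (ρ : ℂ) (h : ρ ≠ 0) (p r : ℕ × ℕ × ℕ) :
    mon ρ p * mon ρ r = kap ρ p r • mon ρ (p + r) := by
  obtain ⟨a, b, c⟩ := p
  obtain ⟨a', b', c'⟩ := r
  have h1 := qcomm _ _ _ (relZX ρ) a' c
  have h2 := qcomm _ _ _ (relYX' ρ h) a' b
  have h3 := qcomm _ _ _ (relZY' ρ h) b' c
  simp only [mon, kap, Prod.mk_add_mk, pow_add]
  generalize qX ρ ^ a = X1 at *
  generalize qX ρ ^ a' = X2 at *
  generalize qY ρ ^ b = Y1 at *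
  generalize qY ρ ^ b' = Y2 at *
  generalize qZ ρ ^ c = Z1 at *
  generalize qZ ρ ^ c' = Z2 at *
  calc X1 * Y1 * Z1 * (X2 * Y2 * Z2) = X1 * Y1 * (Z1 * X2) * Y2 * Z2 := by
        simp only [mul_assoc]
    _ = (ρ ^ c) ^ a' • (X1 * (Y1 * X2) * (Z1 * Y2) * Z2) := by
        rw [h1]; simp only [mul_assoc, mul_smul_comm, smul_mul_assoc]
    _ = _ := by
        rw [h2, h3]; simp only [mul_assoc, mul_smul_comm, smul_mul_assoc, smul_smul]
        congr 1
        ring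

lemma mon_zero (ρ : ℂ) : mon ρ 0 = 1 := by simp [mon]

lemma mon_x (ρ : ℂ) : mon ρ (1, 0, 0) = qX ρ := by simp [mon]
lemma mon_y (ρ : ℂ) : mon ρ (0, 1, 0) = qY ρ := by simp [mon]
lemma mon_z (ρ : ℂ) : mon ρ (0, 0, 1) = qZ ρ := by simp [mon]

lemma span_top (ρ : ℂ) (h : ρ ≠ 0) : ⊤ ≤ Submodule.span ℂ (Set.range (mon ρ)) := by
  set S := Submodule.span ℂ (Set.range (mon ρ)) with hS
  have hm : ∀ p, mon ρ p ∈ S := fun p => Submodule.subset_span ⟨p, rfl⟩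
  have h1 : (1 : QuantumAlg ρ) ∈ S := mon_zero ρ ▸ hm 0
  have hmul : ∀ a b, a ∈ S → b ∈ S → a * b ∈ S := by
    intro a b ha hb
    have : S * S ≤ S := by
      rw [hS, Submodule.span_mul_span, Submodule.span_le]
      rintro _ ⟨_, ⟨p, rfl⟩, _, ⟨r, rfl⟩, rfl⟩
      simp only [mon_mul ρ h]
      exact Submodule.smul_mem _ _ (hm _)
    exact this (Submodule.mul_mem_mul ha hb)
  intro a _
  obtain ⟨f, rfl⟩ := RingQuot.mkAlgHom_surjective ℂ (QuantumRel ρ) a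
  induction f using FreeAlgebra.induction with
  | grade0 r =>
    rw [AlgHom.commutes, Algebra.algebraMap_eq_smul_one]
    exact Submodule.smul_mem _ _ h1
  | grade1 i =>
    fin_cases i
    · have := hm (1, 0, 0)
      rw [mon_x] at this
      exact this
    · have := hm (0, 1, 0)
      rw [mon_y] at this
      exact this
    · have := hm (0, 0, 1)
      rw [mon_z] at this
      exact this
  | mul a b ha hb => rw [map_mul]; exact hmul _ _ (ha trivial) (hb trivial)
  | add a b ha hb => rw [map_add]; exact Submodule.add_mem _ (ha trivial) (hb trivial)

/-- Model operators. -/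
noncomputable def op (d : ℕ × ℕ × ℕ) (w : ℕ × ℕ × ℕ → ℂ) :
    Module.End ℂ ((ℕ × ℕ × ℕ) →₀ ℂ) :=
  Finsupp.linearCombination ℂ (fun p => Finsupp.single (d + p) (w p))

lemma op_single (d : ℕ × ℕ × ℕ) (w : ℕ × ℕ × ℕ → ℂ) (p : ℕ × ℕ × ℕ) (c : ℂ) :
    op d w (Finsupp.single p c) = Finsupp.single (d + p) (c * w p) := by
  simp [op]

/-- Images of generators. -/
noncomputable def gens (ρ : ℂ) : Fin 3 → Module.End ℂ ((ℕ × ℕ × ℕ) →₀ ℂ) :=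
  ![op (1, 0, 0) (fun _ => 1), op (0, 1, 0) (fun p => ρ⁻¹ ^ p.1),
    op (0, 0, 1) (fun p => ρ ^ p.1 * ρ⁻¹ ^ p.2.1)]

/-- The model representation. -/
noncomputable def rep (ρ : ℂ) (h : ρ ≠ 0) :
    QuantumAlg ρ →ₐ[ℂ] Module.End ℂ ((ℕ × ℕ × ℕ) →₀ ℂ) :=
  RingQuot.liftAlgHom ℂ ⟨FreeAlgebra.lift ℂ (gens ρ), by
    intro a b hab
    cases hab <;>
    · simp only [freeGen, map_mul, map_smul, FreeAlgebra.lift_ι_apply, gens]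
      refine Finsupp.lhom_ext fun p c => ?_
      obtain ⟨i, j, k⟩ := p
      simp only [Matrix.cons_val_zero, Matrix.cons_val_one, Matrix.cons_val, Module.End.mul_apply,
        LinearMap.smul_apply, op_single, Finsupp.smul_single, Prod.mk_add_mk, zero_add, smul_eq_mul,
        pow_add, pow_one]
      congr 1
      field_simp⟩

lemma rep_gen (ρ : ℂ) (h : ρ ≠ 0) (i : Fin 3) :
    rep ρ h (RingQuot.mkAlgHom ℂ (QuantumRel ρ) (freeGen i)) = gens ρ i := by
  simp [rep, freeGen]

lemma rep_mon (ρ : ℂ) (h : ρ ≠ 0) (p : ℕ × ℕ × ℕ) :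
    rep ρ h (mon ρ p) (Finsupp.single 0 1) = Finsupp.single p 1 := by
  obtain ⟨a, b, c⟩ := p
  have hx : rep ρ h (qX ρ) = op (1, 0, 0) (fun _ => 1) := rep_gen ρ h 0
  have hy : rep ρ h (qY ρ) = op (0, 1, 0) (fun p => ρ⁻¹ ^ p.1) := rep_gen ρ h 1
  have hz : rep ρ h (qZ ρ) = op (0, 0, 1) (fun p => ρ ^ p.1 * ρ⁻¹ ^ p.2.1) := rep_gen ρ h 2
  have e1 : ∀ c : ℕ, (rep ρ h (qZ ρ) ^ c) (Finsupp.single 0 1) = Finsupp.single (0, 0, c) 1 := by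
    intro c
    induction c with
    | zero => rfl
    | succ c ih => rw [pow_succ', Module.End.mul_apply, ih, hz, op_single]; simp [add_comm]
  have e2 : ∀ b : ℕ, (rep ρ h (qY ρ) ^ b) (Finsupp.single (0, 0, c) 1) =
      Finsupp.single (0, b, c) 1 := by
    intro b
    induction b with
    | zero => rfl
    | succ b ih => rw [pow_succ', Module.End.mul_apply, ih, hy, op_single]; simp [add_comm]
  have e3 : ∀ a : ℕ, (rep ρ h (qX ρ) ^ a) (Finsupp.single (0, b, c) 1) =
      Finsupp.single (a, b, c) 1 := by
    intro a
    induction a with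
    | zero => rfl
    | succ a ih => rw [pow_succ', Module.End.mul_apply, ih, hx, op_single]; simp [add_comm]
  simp only [mon, map_mul, map_pow, Module.End.mul_apply, e1, e2, e3]

lemma mon_li (ρ : ℂ) (h : ρ ≠ 0) : LinearIndependent ℂ (mon ρ) := by
  let L : QuantumAlg ρ →ₗ[ℂ] ((ℕ × ℕ × ℕ) →₀ ℂ) :=
    (LinearMap.applyₗ (Finsupp.single 0 1)).comp (rep ρ h).toLinearMap
  apply LinearIndependent.of_comp L
  have : (L ∘ mon ρ) = fun p => Finsupp.single p (1 : ℂ) := by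
    funext p
    exact rep_mon ρ h p
  rw [this]
  simpa using (Finsupp.basisSingleOne (R := ℂ) (ι := ℕ × ℕ × ℕ)).linearIndependent

/-- The monomial basis. -/
noncomputable def bas (ρ : ℂ) (h : ρ ≠ 0) : Module.Basis (ℕ × ℕ × ℕ) ℂ (QuantumAlg ρ) :=
  Module.Basis.mk (mon_li ρ h) (span_top ρ h)

lemma bas_apply (ρ : ℂ) (h : ρ ≠ 0) (p) : bas ρ h p = mon ρ p := by simp [bas]

lemma bas_repr (ρ : ℂ) (h : ρ ≠ 0) (p) : (bas ρ h).repr (mon ρ p) = Finsupp.single p 1 := by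
  rw [← bas_apply ρ h, Module.Basis.repr_self]

lemma repr_left (ρ : ℂ) (h : ρ ≠ 0) (d p : ℕ × ℕ × ℕ) (a : QuantumAlg ρ) :
    (bas ρ h).repr (mon ρ d * a) (d + p) = kap ρ d p * (bas ρ h).repr a p := by
  let L1 : QuantumAlg ρ →ₗ[ℂ] ℂ := (Finsupp.lapply (d + p)).comp
    ((bas ρ h).repr.toLinearMap.comp (LinearMap.mulLeft ℂ (mon ρ d)))
  let L2 : QuantumAlg ρ →ₗ[ℂ] ℂ := kap ρ d p • (Finsupp.lapply p).comp
    (bas ρ h).repr.toLinearMap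
  have : L1 = L2 := by
    apply (bas ρ h).ext
    intro r
    simp only [L1, L2, bas_apply, LinearMap.comp_apply, LinearMap.smul_apply,
      LinearMap.mulLeft_apply, mon_mul ρ h, LinearEquiv.coe_coe, map_smul, bas_repr,
      Finsupp.lapply_apply, Finsupp.single_apply, add_right_inj, smul_eq_mul]
    split_ifs with hr
    · rw [hr]
    · simp
  exact LinearMap.congr_fun this a

lemma repr_right (ρ : ℂ) (h : ρ ≠ 0) (d p : ℕ × ℕ × ℕ) (a : QuantumAlg ρ) :
    (bas ρ h).repr (a * mon ρ d) (d + p) = kap ρ p d * (bas ρ h).repr a p := by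
  let L1 : QuantumAlg ρ →ₗ[ℂ] ℂ := (Finsupp.lapply (d + p)).comp
    ((bas ρ h).repr.toLinearMap.comp (LinearMap.mulRight ℂ (mon ρ d)))
  let L2 : QuantumAlg ρ →ₗ[ℂ] ℂ := kap ρ p d • (Finsupp.lapply p).comp
    (bas ρ h).repr.toLinearMap
  have : L1 = L2 := by
    apply (bas ρ h).ext
    intro r
    simp only [L1, L2, bas_apply, LinearMap.comp_apply, LinearMap.smul_apply,
      LinearMap.mulRight_apply, mon_mul ρ h, LinearEquiv.coe_coe, map_smul, bas_repr,
      Finsupp.lapply_apply, Finsupp.single_apply, add_comm r d, add_right_inj, smul_eq_mul]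
    split_ifs with hr
    · rw [hr]
    · simp
  exact LinearMap.congr_fun this a

lemma central_supp (ρ : ℂ) (h : ρ ≠ 0) (a : QuantumAlg ρ)
    (ha : a ∈ Subalgebra.center ℂ (QuantumAlg ρ)) (p : ℕ × ℕ × ℕ)
    (hp : (bas ρ h).repr a p ≠ 0) : ρ ^ p.1 = ρ ^ p.2.2 ∧ ρ ^ p.2.1 = ρ ^ p.2.2 := by
  rw [Subalgebra.mem_center_iff] at ha
  have key : ∀ d, kap ρ d p = kap ρ p d := by
    intro d
    have := repr_left ρ h d p a
    rw [ha, repr_right] at this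
    exact (mul_right_cancel₀ hp this).symm
  have h1 := key (1, 0, 0)
  have h2 := key (0, 1, 0)
  simp only [kap, pow_zero, one_pow, pow_one, mul_one, one_mul, inv_pow] at h1 h2
  constructor
  · exact inv_injective h2
  · field_simp at h1
    exact h1

lemma mon_central (ρ : ℂ) (h : ρ ≠ 0) (p : ℕ × ℕ × ℕ) (h1 : ρ ^ p.1 = ρ ^ p.2.2)
    (h2 : ρ ^ p.2.1 = ρ ^ p.2.2) : mon ρ p ∈ Subalgebra.center ℂ (QuantumAlg ρ) := by
  rw [Subalgebra.mem_center_iff]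
  intro b
  have : LinearMap.mulRight ℂ (mon ρ p) = LinearMap.mulLeft ℂ (mon ρ p) := by
    apply (bas ρ h).ext
    intro r
    simp only [bas_apply, LinearMap.mulRight_apply, LinearMap.mulLeft_apply, mon_mul ρ h,
      add_comm r p]
    congr 1
    have e1 : (ρ ^ r.2.2) ^ p.1 = (ρ ^ p.2.2) ^ r.2.2 := by rw [pow_right_comm, h1]
    have e2 : (ρ ^ r.2.1) ^ p.1 = (ρ ^ p.2.2) ^ r.2.1 := by rw [pow_right_comm, h1]
    have e3 : (ρ ^ r.2.2) ^ p.2.1 = (ρ ^ p.2.2) ^ r.2.2 := by rw [pow_right_comm, h2]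
    simp only [kap, inv_pow, e1, e2, e3, h2]
    field_simp
  exact LinearMap.congr_fun this b

/-- `a` is a nonzero multiple of the monomial with exponent `p`. -/
def IsM (ρ : ℂ) (a : QuantumAlg ρ) (p : ℕ × ℕ × ℕ) : Prop := ∃ c : ℂ, c ≠ 0 ∧ a = c • mon ρ p

lemma IsM.mul {ρ : ℂ} (h : ρ ≠ 0) {a b : QuantumAlg ρ} {p r} (ha : IsM ρ a p) (hb : IsM ρ b r) :
    IsM ρ (a * b) (p + r) := by
  obtain ⟨c, hc, rfl⟩ := ha
  obtain ⟨d, hd, rfl⟩ := hb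
  refine ⟨c * d * kap ρ p r, mul_ne_zero (mul_ne_zero hc hd) (kap_ne ρ h _ _), ?_⟩
  rw [smul_mul_smul_comm, mon_mul ρ h, smul_smul]

lemma IsM.pow {ρ : ℂ} (h : ρ ≠ 0) {a : QuantumAlg ρ} {p} (ha : IsM ρ a p) (k : ℕ) :
    IsM ρ (a ^ k) (k • p) := by
  induction k with
  | zero => exact ⟨1, one_ne_zero, by simp [mon_zero]⟩
  | succ k ih => rw [pow_succ, succ_nsmul]; exact ih.mul h ha

end QProof

open QProof in
/-- For `n > 1` and `ρ` a primitive `n`-th root of unity, the center of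
`ℂ_ρ[x,y,z]` is isomorphic as a `ℂ`-algebra to `ℂ[u,v,w,g]/(uvw - gⁿ)`. -/
theorem center_iso (n : ℕ) (hn : 1 < n) (ρ : ℂ) (hρ : IsPrimitiveRoot ρ n) :
    Nonempty
      ((MvPolynomial (Fin 4) ℂ ⧸
          Ideal.span {(MvPolynomial.X 0 : MvPolynomial (Fin 4) ℂ) * MvPolynomial.X 1 *
            MvPolynomial.X 2 - MvPolynomial.X 3 ^ n}) ≃ₐ[ℂ]
        Subalgebra.center ℂ (QuantumAlg ρ)) := by
  have h : ρ ≠ 0 := hρ.ne_zero (by omega)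
  have hρn : ρ ^ n = 1 := hρ.pow_eq_one
  have hM : ∀ p, IsM ρ (mon ρ p) p := fun p => ⟨1, one_ne_zero, (one_smul _ _).symm⟩
  obtain ⟨s, hs, hsg⟩ := (hM (1, 1, 1)).pow h n
  have hc1 := mon_central ρ h (n, 0, 0) (by simp [hρn]) (by simp)
  have hc2 := mon_central ρ h (0, n, 0) (by simp) (by simp [hρn])
  have hc3 := mon_central ρ h (0, 0, n) (by simp [hρn]) (by simp [hρn])
  have hc4 := mon_central ρ h (1, 1, 1) (by simp) (by simp)
  let u : Subalgebra.center ℂ (QuantumAlg ρ) := ⟨s • mon ρ (n, 0, 0), Subalgebra.smul_mem _ hc1 s⟩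
  let v : Subalgebra.center ℂ (QuantumAlg ρ) := ⟨mon ρ (0, n, 0), hc2⟩
  let w : Subalgebra.center ℂ (QuantumAlg ρ) := ⟨mon ρ (0, 0, n), hc3⟩
  let g : Subalgebra.center ℂ (QuantumAlg ρ) := ⟨mon ρ (1, 1, 1), hc4⟩
  have hrel : u * v * w = g ^ n := by
    apply Subtype.ext
    change s • mon ρ (n, 0, 0) * mon ρ (0, n, 0) * mon ρ (0, 0, n) = mon ρ (1, 1, 1) ^ n
    rw [hsg]
    simp [mon]
  let F0 : MvPolynomial (Fin 4) ℂ →ₐ[ℂ] Subalgebra.center ℂ (QuantumAlg ρ) :=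
    MvPolynomial.aeval ![u, v, w, g]
  set I : Ideal (MvPolynomial (Fin 4) ℂ) :=
    Ideal.span {(MvPolynomial.X 0 : MvPolynomial (Fin 4) ℂ) * MvPolynomial.X 1 *
            MvPolynomial.X 2 - MvPolynomial.X 3 ^ n} with hI
  have hF0 : ∀ a ∈ I, F0 a = 0 := by
    intro a ha
    have : I ≤ RingHom.ker F0 := by
      rw [hI, Ideal.span_le, Set.singleton_subset_iff]
      simp [F0, RingHom.mem_ker, hrel]
    exact this ha
  let F := Ideal.Quotient.liftₐ I F0 hF0
  let m : ℕ × ℕ × ℕ × Fin n → MvPolynomial (Fin 4) ℂ := fun t =>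
    MvPolynomial.X 0 ^ t.1 * MvPolynomial.X 1 ^ t.2.1 * MvPolynomial.X 2 ^ t.2.2.1 *
      MvPolynomial.X 3 ^ (t.2.2.2 : ℕ)
  let ψ : ((ℕ × ℕ × ℕ × Fin n) →₀ ℂ) →ₗ[ℂ] (MvPolynomial (Fin 4) ℂ ⧸ I) :=
    Finsupp.linearCombination ℂ (fun t => Ideal.Quotient.mk I (m t))
  let e : ℕ × ℕ × ℕ × Fin n → ℕ × ℕ × ℕ := fun t =>
    (n * t.1 + t.2.2.2, n * t.2.1 + t.2.2.2, n * t.2.2.1 + t.2.2.2)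
  have he : Function.Injective e := by
    rintro ⟨a, b, c, r⟩ ⟨a', b', c', r'⟩ hh
    simp only [e, Prod.mk.injEq] at hh
    obtain ⟨h1, h2, h3⟩ := hh
    have hr : (r : ℕ) = r' := by
      have := congrArg (· % n) h1
      simpa [Nat.mul_add_mod, Nat.mod_eq_of_lt] using this
    have hn0 : 0 < n := by omega
    rw [hr] at h1 h2 h3
    have q1 := Nat.eq_of_mul_eq_mul_left hn0 (Nat.add_right_cancel h1)
    have q2 := Nat.eq_of_mul_eq_mul_left hn0 (Nat.add_right_cancel h2)
    have q3 := Nat.eq_of_mul_eq_mul_left hn0 (Nat.add_right_cancel h3)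
    simp [q1, q2, q3, Fin.ext hr]
  have hFm : ∀ t, IsM ρ (F (Ideal.Quotient.mk I (m t)) : QuantumAlg ρ) (e t) := by
    rintro ⟨a, b, c, r⟩
    have e1 : (F (Ideal.Quotient.mk I (m (a, b, c, r))) : QuantumAlg ρ) =
        (s • mon ρ (n, 0, 0)) ^ a * mon ρ (0, n, 0) ^ b * mon ρ (0, 0, n) ^ c *
          mon ρ (1, 1, 1) ^ (r : ℕ) := by
      have : F (Ideal.Quotient.mk I (m (a, b, c, r))) = u ^ a * v ^ b * w ^ c * g ^ (r : ℕ) := by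
        change F0 _ = _
        simp [F0, m]
      rw [this]
      rfl
    have hu : IsM ρ (s • mon ρ (n, 0, 0)) (n, 0, 0) := ⟨s, hs, rfl⟩
    have := (((hu.pow h a).mul h ((hM (0, n, 0)).pow h b)).mul h
      ((hM (0, 0, n)).pow h c)).mul h ((hM (1, 1, 1)).pow h r)
    rw [e1]
    convert this using 1
    simp [e, mul_comm]
  choose cf hcf hcfe using hFm
  -- surjectivity of ψ
  have hψ : Function.Surjective ψ := by
    rw [← LinearMap.range_eq_top, eq_top_iff]
    rintro q -
    obtain ⟨p, rfl⟩ := Ideal.Quotient.mk_surjective q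
    have hrelQ : Ideal.Quotient.mk I (MvPolynomial.X 0) * Ideal.Quotient.mk I (MvPolynomial.X 1) *
        Ideal.Quotient.mk I (MvPolynomial.X 2) = Ideal.Quotient.mk I (MvPolynomial.X 3) ^ n := by
      rw [← map_mul, ← map_mul, ← map_pow, Ideal.Quotient.eq]
      exact Ideal.subset_span rfl
    induction p using MvPolynomial.induction_on' with
    | monomial k a =>
      let t : ℕ × ℕ × ℕ × Fin n :=
        (k 0 + k 3 / n, k 1 + k 3 / n, k 2 + k 3 / n, ⟨k 3 % n, Nat.mod_lt _ (by omega)⟩)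
      refine ⟨Finsupp.single t a, ?_⟩
      have e1 : MvPolynomial.monomial k a = a • (MvPolynomial.X 0 ^ k 0 * MvPolynomial.X 1 ^ k 1 *
          MvPolynomial.X 2 ^ k 2 * MvPolynomial.X 3 ^ k 3 : MvPolynomial (Fin 4) ℂ) := by
        rw [MvPolynomial.monomial_eq, Finsupp.prod_fintype _ _ (by simp), Fin.prod_univ_four,
          MvPolynomial.smul_eq_C_mul]
      have e2 : ∀ (c : ℂ) (q : MvPolynomial (Fin 4) ℂ),
          Ideal.Quotient.mk I (c • q) = c • Ideal.Quotient.mk I q := fun c q => rfl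
      have e3 : Ideal.Quotient.mk I (MvPolynomial.X 3) ^ k 3 =
          (Ideal.Quotient.mk I (MvPolynomial.X 3) ^ n) ^ (k 3 / n) *
            Ideal.Quotient.mk I (MvPolynomial.X 3) ^ (k 3 % n) := by
        rw [← pow_mul, ← pow_add, Nat.div_add_mod]
      rw [e1, e2]
      simp only [ψ, Finsupp.linearCombination_single, m, t, map_mul, map_pow]
      rw [e3, ← hrelQ]
      congr 1
      ring
    | add p q hp hq => rw [map_add]; exact Submodule.add_mem _ hp hq
  have hFψ : Function.Injective (F.toLinearMap.comp ψ) := by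
    have li : LinearIndependent ℂ (fun t => cf t • mon ρ (e t)) := by
      have := ((mon_li ρ h).comp e he).units_smul (fun t => Units.mk0 (cf t) (hcf t))
      exact this
    have : Function.Injective
        ((Subalgebra.center ℂ (QuantumAlg ρ)).val.toLinearMap.comp (F.toLinearMap.comp ψ)) := by
      have e4 : (Subalgebra.center ℂ (QuantumAlg ρ)).val.toLinearMap.comp (F.toLinearMap.comp ψ) =
          Finsupp.linearCombination ℂ (fun t => cf t • mon ρ (e t)) := by
        apply Finsupp.lhom_ext
        intro t c
        simp [ψ, hcfe]
      rw [e4]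
      exact li
    intro a b hab
    exact this (congrArg Subtype.val hab)
  have hFinj : Function.Injective F := by
    intro a b hab
    obtain ⟨a, rfl⟩ := hψ a
    obtain ⟨b, rfl⟩ := hψ b
    rw [hFψ hab]
  have hFsurj : Function.Surjective F := by
    rintro ⟨a, ha⟩
    have hmem : a ∈ LinearMap.range
        ((Subalgebra.center ℂ (QuantumAlg ρ)).val.toLinearMap.comp F.toLinearMap) := by
      rw [← (bas ρ h).linearCombination_repr a, Finsupp.linearCombination_apply]
      refine Submodule.sum_mem _ fun p hp => Submodule.smul_mem _ _ ?_
      rw [Finsupp.mem_support_iff] at hp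
      obtain ⟨h1, h2⟩ := central_supp ρ h a ha p hp
      have k1 : p.1 % n = p.2.2 % n := by
        rwa [(hρ.isOfFinOrder (by omega)).pow_inj_mod, ← hρ.eq_orderOf] at h1
      have k2 : p.2.1 % n = p.2.2 % n := by
        rwa [(hρ.isOfFinOrder (by omega)).pow_inj_mod, ← hρ.eq_orderOf] at h2
      let t : ℕ × ℕ × ℕ × Fin n :=
        (p.1 / n, p.2.1 / n, p.2.2 / n, ⟨p.2.2 % n, Nat.mod_lt _ (by omega)⟩)
      have het : e t = p := by
        obtain ⟨i, j, k⟩ := p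
        simp only at k1 k2
        simp only [e, t, Nat.div_add_mod, Prod.mk.injEq, and_true]
        exact ⟨by rw [← k1, Nat.div_add_mod], by rw [← k2, Nat.div_add_mod]⟩
      refine ⟨(cf t)⁻¹ • Ideal.Quotient.mk I (m t), ?_⟩
      rw [map_smul]
      change (cf t)⁻¹ • (F (Ideal.Quotient.mk I (m t)) : QuantumAlg ρ) = _
      rw [hcfe, smul_smul, inv_mul_cancel₀ (hcf t), one_smul, het, bas_apply]
    obtain ⟨q, hq⟩ := hmem
    exact ⟨q, Subtype.ext hq⟩
  exact ⟨AlgEquiv.ofBijective F ⟨hFinj, hFsurj⟩⟩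
end

section
/- For every integer n ≥ 1, the integral domain ℂ[u,v,w,g]/(uvw − g^n) is integrally closed in its field of fractions. -/
open MvPolynomial in
/-- A ring with an injective map to an integrally closed domain admitting a linear retraction
is integrally closed. -/
theorem closed_of_retract {R P : Type*} [CommRing R] [CommRing P] [IsDomain P]
    [IsIntegrallyClosed P] (φ : R →+* P) (ρ : P → R)
    (h1 : ρ 1 = 1) (hρ : ∀ r p, ρ (φ r * p) = r * ρ p) : IsIntegrallyClosed R := by
  have hinv : ∀ r, ρ (φ r) = r := fun r => by simpa [h1] using hρ r 1
  have hinj : Function.Injective φ := Function.LeftInverse.injective hinv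
  have : IsDomain R := hinj.isDomain φ
  rw [isIntegrallyClosed_iff (FractionRing R)]
  intro x hx
  let ψ : FractionRing R →+* FractionRing P := IsFractionRing.map (A := R) (B := P) hinj
  have hψ : ∀ r, ψ (algebraMap R _ r) = algebraMap P _ (φ r) := fun r => by
    simp [ψ, IsFractionRing.map]
  have hx' : IsIntegral P (ψ x) := by
    obtain ⟨f, hf, hfx⟩ := hx
    refine ⟨f.map φ, hf.map φ, ?_⟩
    rw [Polynomial.eval₂_map]
    have : (algebraMap P (FractionRing P)).comp φ = ψ.comp (algebraMap R (FractionRing R)) := by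
      ext r
      simp [hψ]
    rw [this, ← Polynomial.hom_eval₂, hfx, map_zero]
  obtain ⟨h, hh⟩ := (isIntegrallyClosed_iff (FractionRing P)).1 inferInstance hx'
  obtain ⟨p, q, hq, rfl⟩ := IsFractionRing.div_surjective (A := R) x
  have hq0 : q ≠ 0 := nonZeroDivisors.ne_zero hq
  have hq1 : algebraMap R (FractionRing R) q ≠ 0 := by
    simpa using hq0
  have hq2 : algebraMap P (FractionRing P) (φ q) ≠ 0 := by
    simpa using (map_ne_zero_iff φ hinj).2 hq0
  rw [map_div₀, hψ, hψ, eq_div_iff hq2, ← map_mul] at hh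
  have hh' : φ q * h = φ p := by
    rw [mul_comm]
    exact IsFractionRing.injective P (FractionRing P) hh
  refine ⟨ρ h, ?_⟩
  rw [eq_div_iff hq1, ← map_mul, mul_comm, ← hρ, hh', hinv]

open MvPolynomial in
/-- for every `n ≥ 1`, the integral domain `ℂ[u,v,w,g]/(uvw - gⁿ)` is
integrally closed in its field of fractions. -/
theorem quotient_integrally_closed (n : ℕ) (hn : 1 ≤ n) :
    IsIntegrallyClosed (MvPolynomial (Fin 4) ℂ ⧸
      Ideal.span {(MvPolynomial.X 0 : MvPolynomial (Fin 4) ℂ) * MvPolynomial.X 1 *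
        MvPolynomial.X 2 - MvPolynomial.X 3 ^ n}) := by
  set I : Ideal (MvPolynomial (Fin 4) ℂ) := Ideal.span {(MvPolynomial.X 0 : MvPolynomial (Fin 4) ℂ) * MvPolynomial.X 1 *
        MvPolynomial.X 2 - MvPolynomial.X 3 ^ n} with hI
  let e : Fin 4 → (Fin 3 →₀ ℕ) := ![Finsupp.single 0 n, Finsupp.single 1 n, Finsupp.single 2 n,
    Finsupp.single 0 1 + Finsupp.single 1 1 + Finsupp.single 2 1]
  let φ₀ : MvPolynomial (Fin 4) ℂ →ₐ[ℂ] MvPolynomial (Fin 3) ℂ :=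
    aeval (fun i => monomial (e i) 1)
  have hφ₀ : ∀ a ∈ I, φ₀ a = 0 := by
    intro a ha
    have : I ≤ RingHom.ker φ₀ := by
      rw [hI, Ideal.span_singleton_le_iff_mem, RingHom.mem_ker]
      simp [φ₀, e, monomial_mul, monomial_pow]
    exact this ha
  let φ : (MvPolynomial (Fin 4) ℂ ⧸ I) →+* MvPolynomial (Fin 3) ℂ :=
    Ideal.Quotient.lift I φ₀.toRingHom hφ₀
  let t : Fin 4 → MvPolynomial (Fin 4) ℂ ⧸ I := fun i => Ideal.Quotient.mk I (X i)
  have ht : t 0 * t 1 * t 2 = t 3 ^ n := by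
    simp only [t, ← map_mul, ← map_pow]
    rw [Ideal.Quotient.eq]
    exact Ideal.mem_span_singleton_self _
  let f : (Fin 3 →₀ ℕ) → MvPolynomial (Fin 4) ℂ ⧸ I := fun s =>
    if s 0 % n = s 1 % n ∧ s 1 % n = s 2 % n then
      t 0 ^ (s 0 / n) * t 1 ^ (s 1 / n) * t 2 ^ (s 2 / n) * t 3 ^ (s 0 % n) else 0
  have hf : ∀ i s, f (e i + s) = t i * f s := by
    intro i s
    have hn' : 0 < n := hn
    fin_cases i
    · simp [f, e, Nat.add_div_left _ hn', pow_succ]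
      intros; ring
    · simp [f, e, Nat.add_div_left _ hn', pow_succ]
      intros; ring
    · simp [f, e, Nat.add_div_left _ hn', pow_succ]
      intros; ring
    · have key : ∀ a b : ℕ, (1 + a) % n = (1 + b) % n ↔ a % n = b % n := fun a b =>
        ⟨fun h => Nat.ModEq.add_left_cancel' 1 h, fun h => Nat.ModEq.add_left 1 h⟩
      simp only [f]
      have e0 : (e 3 + s) 0 = 1 + s 0 := by simp [e]
      have e1 : (e 3 + s) 1 = 1 + s 1 := by simp [e]
      have e2 : (e 3 + s) 2 = 1 + s 2 := by simp [e]
      change (if (e 3 + s) 0 % n = (e 3 + s) 1 % n ∧ (e 3 + s) 1 % n = (e 3 + s) 2 % n then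
        t 0 ^ ((e 3 + s) 0 / n) * t 1 ^ ((e 3 + s) 1 / n) * t 2 ^ ((e 3 + s) 2 / n) *
          t 3 ^ ((e 3 + s) 0 % n) else 0) = t 3 * _
      rw [e0, e1, e2]
      simp only [key]
      split_ifs with h
      · obtain ⟨h1, h2⟩ := h
        have hs : ∀ a : ℕ, a % n + 1 < n → (1 + a) / n = a / n ∧ (1 + a) % n = a % n + 1 := by
          intro a ha
          rw [Nat.div_mod_unique hn']
          have := Nat.mod_add_div a n
          exact ⟨by omega, ha⟩
        have hb : ∀ a : ℕ, a % n + 1 = n → (1 + a) / n = a / n + 1 ∧ (1 + a) % n = 0 := by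
          intro a ha
          rw [Nat.div_mod_unique hn']
          have := Nat.mod_add_div a n
          exact ⟨by rw [mul_add]; omega, hn'⟩
        have hlt := Nat.mod_lt (s 0) hn'
        rcases Nat.lt_or_ge (s 0 % n + 1) n with hc | hc
        · rw [(hs _ hc).1, (hs _ hc).2, (hs (s 1) (by omega)).1, (hs (s 2) (by omega)).1]
          ring
        · have hc' : s 0 % n + 1 = n := by omega
          rw [(hb _ hc').1, (hb _ hc').2, (hb (s 1) (by omega)).1, (hb (s 2) (by omega)).1]
          have : t 3 * t 3 ^ (s 0 % n) = t 0 * t 1 * t 2 := by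
            rw [ht, ← pow_succ', hc']
          linear_combination (-(t 0 ^ (s 0 / n) * t 1 ^ (s 1 / n) * t 2 ^ (s 2 / n))) * this
      · simp
  let ρ : MvPolynomial (Fin 3) ℂ →ₗ[ℂ] (MvPolynomial (Fin 4) ℂ ⧸ I) :=
    (basisMonomials (Fin 3) ℂ).constr ℂ f
  have hρf : ∀ s, ρ (monomial s 1) = f s := by
    intro s
    have := (basisMonomials (Fin 3) ℂ).constr_basis ℂ f s
    simpa [ρ] using this
  have hX : ∀ i p, ρ (monomial (e i) 1 * p) = t i * ρ p := by
    intro i p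
    have : ρ ∘ₗ LinearMap.mulLeft ℂ (monomial (e i) 1) = LinearMap.mulLeft ℂ (t i) ∘ₗ ρ := by
      apply (basisMonomials (Fin 3) ℂ).ext
      intro s
      simp [monomial_mul, hρf, hf]
    exact LinearMap.congr_fun this p
  have hmain : ∀ a p, ρ (φ₀ a * p) = Ideal.Quotient.mk I a * ρ p := by
    intro a
    induction a using MvPolynomial.induction_on with
    | C c =>
      intro p
      have : φ₀ (C c) = C c := by simp [φ₀]
      rw [this, C_mul', map_smul]
      obtain ⟨q, hq⟩ := Ideal.Quotient.mk_surjective (ρ p)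
      rw [← hq, ← map_mul, C_mul']
      rfl
    | add a b ha hb => intro p; rw [map_add, add_mul, map_add, ha, hb, map_add, add_mul]
    | mul_X a i ha =>
      intro p
      have : φ₀ (X i) = monomial (e i) 1 := by simp [φ₀]
      rw [map_mul φ₀, mul_assoc, ha, this, hX, map_mul (Ideal.Quotient.mk I), mul_assoc]
  refine closed_of_retract φ ρ ?_ ?_
  · have := hρf 0
    rw [show (monomial (0 : Fin 3 →₀ ℕ) (1 : ℂ)) = 1 from rfl] at this
    rw [this]
    simp [f]
  · intro r p
    obtain ⟨a, rfl⟩ := Ideal.Quotient.mk_surjective r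
    exact hmain a p
end
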